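/- arXiv:2408.03037 — 2 statements merged into one kernel-verified Lean document; each statement's English description precedes it below -/
import Mathlib

section
/- Genie-aided equality (Appendix B): The region R_{ed,f,f} of achievable cost pairs for control designs in which the causal encoder has strictly causal channel feedback Y_1^{t−1} AND the causal decoder additionally receives the strictly causal source feed-forward X_0^{t−1} equals the region R_ed for causal encoder and causal decoder without feedback or feed-forward: R_{ed,f,f} = R_ed. In particular, since R_{ed,f,f} ⊇ R_{ed,f} ⊇ R_ed, adding channel feedback and source feed-forward does not enlarge the achievable region. -/
/-!
Formalization of results from "Causal Vector-valued Witsenhausen Counterexamples with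
Feedback" (Zhao, Le Treust, Oechtering).

Stochastic encoders/decoders (stochastic kernels) are realized as measurable functions of
independent i.i.d. randomization seeds, which is equivalent to the kernel formulation on
standard Borel spaces.
-/

open MeasureTheory ProbabilityTheory
open scoped ENNReal NNReal

namespace Witsenhausen

noncomputable section

/-- A path (block of length `n`) of real values. -/
abbrev Path (n : ℕ) : Type := Fin n → ℝ

/-- i.i.d. centered Gaussian vector of length `n` and variance `v`. -/
def iidGaussian (n : ℕ) (v : ℝ≥0) : Measure (Path n) :=
  Measure.pi fun _ => gaussianReal 0 v

instance (n : ℕ) (v : ℝ≥0) : IsProbabilityMeasure (iidGaussian n v) := by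
  unfold iidGaussian; infer_instance

/-- Canonical sample space: source `X₀ⁿ`, channel noise `Z₁ⁿ`, and the randomization seeds of
the (stochastic) encoder and decoder. -/
abbrev Sample (n : ℕ) : Type := Path n × Path n × Path n × Path n

/-- The base randomness: the i.i.d. `N(0,Q)` source `X₀ⁿ`, the independent i.i.d. `N(0,N)`
channel noise `Z₁ⁿ`, and independent i.i.d. randomization seeds for the stochastic encoder
and decoder. -/
def base (n : ℕ) (Q N : ℝ≥0) : Measure (Sample n) :=
  (iidGaussian n Q).prod ((iidGaussian n N).prod
    ((iidGaussian n 1).prod (iidGaussian n 1)))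

instance (n : ℕ) (Q N : ℝ≥0) : IsProbabilityMeasure (base n Q N) := by
  unfold base; infer_instance

/-- The source sequence `X₀ⁿ`. -/
def srcX0 {n : ℕ} (ω : Sample n) : Path n := ω.1
/-- The channel noise sequence `Z₁ⁿ`. -/
def noiseZ {n : ℕ} (ω : Sample n) : Path n := ω.2.1
/-- The encoder randomization seeds. -/
def seedV {n : ℕ} (ω : Sample n) : Path n := ω.2.2.1
/-- The decoder randomization seeds. -/
def seedW {n : ℕ} (ω : Sample n) : Path n := ω.2.2.2

/-- The long-run input cost `c_P(u₁ⁿ) = (1/n) ∑_t u_{1,t}²`. -/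
def costP {n : ℕ} (u : Path n) : ℝ := (1 / (n : ℝ)) * ∑ t, (u t) ^ 2

/-- The long-run estimation cost `c_S(x₁ⁿ, u₂ⁿ) = (1/n) ∑_t (x_{1,t} - u_{2,t})²`. -/
def costS {n : ℕ} (x u : Path n) : ℝ := (1 / (n : ℝ)) * ∑ t, (x t - u t) ^ 2

/-- A control design with causal encoder and causal decoder: at each time `t` the stochastic
encoder `f^t` observes `X₀^t` and the stochastic decoder `g^t` observes `Y₁^t` (stochastic
maps are realized as measurable functions of independent randomization seeds). -/
structure Design (n : ℕ) where
  enc : Fin n → Path n → ℝ → ℝ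
  dec : Fin n → Path n → ℝ → ℝ
  enc_meas : ∀ t, Measurable fun p : Path n × ℝ => enc t p.1 p.2
  dec_meas : ∀ t, Measurable fun p : Path n × ℝ => dec t p.1 p.2
  /-- causal encoding: `U_{1,t}` depends on the source only through `X₀^t`. -/
  enc_causal : ∀ (t : Fin n) (x x' : Path n) (v : ℝ),
    (∀ s, s ≤ t → x s = x' s) → enc t x v = enc t x' v
  /-- causal decoding: `U_{2,t}` depends on the channel output only through `Y₁^t`. -/
  dec_causal : ∀ (t : Fin n) (y y' : Path n) (w : ℝ),
    (∀ s, s ≤ t → y s = y' s) → dec t y w = dec t y' w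

namespace Design

variable {n : ℕ} (c : Design n)

/-- The control sequence `U₁ⁿ`. -/
def U1 (ω : Sample n) : Path n := fun t => c.enc t (srcX0 ω) (seedV ω t)
/-- The interim state `X₁ⁿ = X₀ⁿ + U₁ⁿ`. -/
def X1 (ω : Sample n) : Path n := fun t => srcX0 ω t + c.U1 ω t
/-- The channel output `Y₁ⁿ = X₁ⁿ + Z₁ⁿ`. -/
def Y1 (ω : Sample n) : Path n := fun t => c.X1 ω t + noiseZ ω t
/-- The estimate sequence `U₂ⁿ`. -/
def U2 (ω : Sample n) : Path n := fun t => c.dec t (c.Y1 ω) (seedW ω t)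

end Design

/-- `(P, S)` is an achievable pair of costs for causal encoding and causal decoding: for every
`ε > 0` there is `n₀` such that for every blocklength `n ≥ n₀` some control design makes the
expected cost deviation `E[|P - c_P(U₁ⁿ)| + |S - c_S(X₁ⁿ, U₂ⁿ)|]` at most `ε`.
This defines the region `R_ed`. -/
def achievable (Q N : ℝ≥0) (P S : ℝ) : Prop :=
  ∀ ε > (0 : ℝ), ∃ n₀ : ℕ, ∀ n ≥ n₀, ∃ c : Design n,
    (∫⁻ ω, ENNReal.ofReal
        (|P - costP (c.U1 ω)| + |S - costS (c.X1 ω) (c.U2 ω)|) ∂(base n Q N))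
      ≤ ENNReal.ofReal ε

/-- The control sequence generated recursively by a feedback encoder: at each time `t < n`,
`U_{1,t}` is produced from the source `x`, the past channel outputs
`Y_{1,s} = X_{0,s} + U_{1,s} + Z_{1,s}` for `s < t` (the strict prefix, padded by `0`), and
the seed `v t`. -/
def fbCtrl {n : ℕ} (enc : Fin n → Path n → Path n → ℝ → ℝ)
    (x z v : Path n) (t : ℕ) : ℝ :=
  if ht : t < n then
    enc ⟨t, ht⟩ x
      (fun s : Fin n => if hs : (s : ℕ) < t then x s + fbCtrl enc x z v s + z s else 0)
      (v ⟨t, ht⟩)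
  else 0
termination_by t
decreasing_by exact hs

/-- A control design with causal encoder with (strictly causal) channel feedback and causal
decoder: at time `t` the stochastic encoder `f^{f,t}` observes `(X₀^t, Y₁^{t-1})` and the
stochastic decoder `g^t` observes `Y₁^t`. -/
structure FBDesign (n : ℕ) where
  enc : Fin n → Path n → Path n → ℝ → ℝ
  dec : Fin n → Path n → ℝ → ℝ
  enc_meas : ∀ t, Measurable fun p : (Path n × Path n) × ℝ => enc t p.1.1 p.1.2 p.2
  dec_meas : ∀ t, Measurable fun p : Path n × ℝ => dec t p.1 p.2
  /-- the encoder observes the source causally and the channel output strictly causally -/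
  enc_causal : ∀ (t : Fin n) (x x' y y' : Path n) (v : ℝ),
    (∀ s, s ≤ t → x s = x' s) → (∀ s, s < t → y s = y' s) →
      enc t x y v = enc t x' y' v
  /-- causal decoding -/
  dec_causal : ∀ (t : Fin n) (y y' : Path n) (w : ℝ),
    (∀ s, s ≤ t → y s = y' s) → dec t y w = dec t y' w

namespace FBDesign

variable {n : ℕ} (c : FBDesign n)

/-- The control sequence `U₁ⁿ` (defined recursively through the feedback loop). -/
def U1 (ω : Sample n) : Path n := fun t => fbCtrl c.enc (srcX0 ω) (noiseZ ω) (seedV ω) t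
/-- The interim state `X₁ⁿ = X₀ⁿ + U₁ⁿ`. -/
def X1 (ω : Sample n) : Path n := fun t => srcX0 ω t + c.U1 ω t
/-- The channel output `Y₁ⁿ = X₁ⁿ + Z₁ⁿ`. -/
def Y1 (ω : Sample n) : Path n := fun t => c.X1 ω t + noiseZ ω t
/-- The estimate sequence `U₂ⁿ`. -/
def U2 (ω : Sample n) : Path n := fun t => c.dec t (c.Y1 ω) (seedW ω t)

end FBDesign

/-- The region `R_{ed,f}`: achievable pairs of costs for causal encoding with channel feedback
and causal decoding. -/
def achievableFB (Q N : ℝ≥0) (P S : ℝ) : Prop :=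
  ∀ ε > (0 : ℝ), ∃ n₀ : ℕ, ∀ n ≥ n₀, ∃ c : FBDesign n,
    (∫⁻ ω, ENNReal.ofReal
        (|P - costP (c.U1 ω)| + |S - costS (c.X1 ω) (c.U2 ω)|) ∂(base n Q N))
      ≤ ENNReal.ofReal ε

/-- A control design with causal encoder with (strictly causal) channel feedback and causal
decoder with (strictly causal) source feed-forward: at time `t` the encoder observes
`(X₀^t, Y₁^{t-1})` and the decoder observes `(Y₁^t, X₀^{t-1})`. -/
structure FBFFDesign (n : ℕ) where
  enc : Fin n → Path n → Path n → ℝ → ℝ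
  dec : Fin n → Path n → Path n → ℝ → ℝ
  enc_meas : ∀ t, Measurable fun p : (Path n × Path n) × ℝ => enc t p.1.1 p.1.2 p.2
  dec_meas : ∀ t, Measurable fun p : (Path n × Path n) × ℝ => dec t p.1.1 p.1.2 p.2
  /-- the encoder observes the source causally and the channel output strictly causally -/
  enc_causal : ∀ (t : Fin n) (x x' y y' : Path n) (v : ℝ),
    (∀ s, s ≤ t → x s = x' s) → (∀ s, s < t → y s = y' s) →
      enc t x y v = enc t x' y' v
  /-- the decoder observes the channel output causally and the source strictly causally -/
  dec_causal : ∀ (t : Fin n) (y y' x x' : Path n) (w : ℝ),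
    (∀ s, s ≤ t → y s = y' s) → (∀ s, s < t → x s = x' s) →
      dec t y x w = dec t y' x' w

namespace FBFFDesign

variable {n : ℕ} (c : FBFFDesign n)

/-- The control sequence `U₁ⁿ` (defined recursively through the feedback loop). -/
def U1 (ω : Sample n) : Path n := fun t => fbCtrl c.enc (srcX0 ω) (noiseZ ω) (seedV ω) t
/-- The interim state `X₁ⁿ = X₀ⁿ + U₁ⁿ`. -/
def X1 (ω : Sample n) : Path n := fun t => srcX0 ω t + c.U1 ω t
/-- The channel output `Y₁ⁿ = X₁ⁿ + Z₁ⁿ`. -/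
def Y1 (ω : Sample n) : Path n := fun t => c.X1 ω t + noiseZ ω t
/-- The estimate sequence `U₂ⁿ`. -/
def U2 (ω : Sample n) : Path n := fun t => c.dec t (c.Y1 ω) (srcX0 ω) (seedW ω t)

end FBFFDesign

/-- The region `R_{ed,f,f}`: achievable pairs of costs with channel feedback at the encoder
and source feed-forward at the decoder. -/
def achievableFBFF (Q N : ℝ≥0) (P S : ℝ) : Prop :=
  ∀ ε > (0 : ℝ), ∃ n₀ : ℕ, ∀ n ≥ n₀, ∃ c : FBFFDesign n,
    (∫⁻ ω, ENNReal.ofReal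
        (|P - costP (c.U1 ω)| + |S - costS (c.X1 ω) (c.U2 ω)|) ∂(base n Q N))
      ≤ ENNReal.ofReal ε

/-- The `L¹` law of large numbers for i.i.d. samples, on the finite product spaces. -/
theorem exists_lintegral_average_le {β : Type} [MeasurableSpace β] (ρ : Measure β)
    [IsProbabilityMeasure ρ] {h : β → ℝ} (hm : Measurable h) (hi : Integrable h ρ)
    {ε : ℝ} (hε : 0 < ε) :
    ∃ n₀ : ℕ, ∀ n ≥ n₀, ∫⁻ s : Fin n → β,
      ENNReal.ofReal |(∫ b, h b ∂ρ) - (1 / (n : ℝ)) * ∑ i, h (s i)|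
        ∂(Measure.pi fun _ => ρ) ≤ ENNReal.ofReal ε := by
  obtain ⟨Ω, _, Pr, X, hX, hlaw, hind, _⟩ := exists_iid ℕ ρ
  have hint : ∫ ω, h (X 0 ω) ∂Pr = ∫ b, h b ∂ρ := (hlaw 0).integral_comp hm.aestronglyMeasurable
  have hid : ∀ i, IdentDistrib (X i) (X 0) Pr Pr := fun i =>
    ⟨(hX i).aemeasurable, (hX 0).aemeasurable, by rw [(hlaw i).map_eq, (hlaw 0).map_eq]⟩
  have hL := strong_law_Lp (μ := Pr) le_rfl ENNReal.one_ne_top (fun i ω => h (X i ω))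
    (memLp_one_iff_integrable.2 (by
      have := (hlaw 0).map_eq ▸ hi
      exact this.comp_measurable (hX 0)))
    (fun i j hij => (hind.indepFun hij).comp hm hm) (fun i => (hid i).comp hm)
  obtain ⟨n₀, hn₀⟩ := Filter.eventually_atTop.1
    (hL.eventually (ge_mem_nhds (ENNReal.ofReal_pos.2 hε)))
  refine ⟨n₀, fun n hn => le_trans (le_of_eq ?_) (hn₀ n hn)⟩
  have hmap : Pr.map (fun ω (i : Fin n) => X i ω) = Measure.pi fun _ => ρ := by
    have := (iIndepFun_iff_map_fun_eq_pi_map (fun i : Fin n => (hX i).aemeasurable)).1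
      (hind.precomp Fin.val_injective)
    rw [this]
    simp only [(hlaw _).map_eq]
  rw [← hmap, lintegral_map (by fun_prop) (by fun_prop), eLpNorm_one_eq_lintegral_enorm]
  refine lintegral_congr fun ω => ?_
  rw [← Real.enorm_eq_ofReal_abs, ← enorm_neg, hint, Fin.sum_univ_eq_sum_range (fun i => h (X i ω))]
  simp

/-- Random parameters can be derandomized: for large `n` some fixed parameters `w₁, …, wₙ` make
the empirical averages of `h` and `k` close to their joint means. -/
theorem exists_parameters_lintegral_average_le {W T : Type} [MeasurableSpace W] [MeasurableSpace T]
    (ν : Measure W) (μ : Measure T) [IsProbabilityMeasure ν] [IsProbabilityMeasure μ]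
    {h k : W × T → ℝ} (hm : Measurable h) (km : Measurable k)
    (hi : Integrable h (ν.prod μ)) (ki : Integrable k (ν.prod μ)) {ε : ℝ} (hε : 0 < ε) :
    ∃ n₀ : ℕ, ∀ n ≥ n₀, ∃ w : Fin n → W, ∫⁻ s : Fin n → T,
      ENNReal.ofReal (|(∫ b, h b ∂(ν.prod μ)) - (1 / (n : ℝ)) * ∑ i, h (w i, s i)|
        + |(∫ b, k b ∂(ν.prod μ)) - (1 / (n : ℝ)) * ∑ i, k (w i, s i)|)
        ∂(Measure.pi fun _ => μ) ≤ ENNReal.ofReal ε := by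
  obtain ⟨n₁, h₁⟩ := exists_lintegral_average_le _ hm hi (half_pos hε)
  obtain ⟨n₂, h₂⟩ := exists_lintegral_average_le _ km ki (half_pos hε)
  refine ⟨max n₁ n₂, fun n hn => ?_⟩
  have H := add_le_add (h₁ n (le_of_max_le_left hn)) (h₂ n (le_of_max_le_right hn))
  rw [← ENNReal.ofReal_add (half_pos hε).le (half_pos hε).le, add_halves,
    ← lintegral_add_left (by fun_prop)] at H
  have mp := (measurePreserving_arrowProdEquivProdArrow W T (Fin n) (fun _ => ν) (fun _ => μ)).symm
  rw [← mp.map_eq, lintegral_map (by fun_prop) mp.measurable,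
    lintegral_prod _ (by fun_prop)] at H
  obtain ⟨w, hw⟩ := exists_le_lintegral (μ := Measure.pi fun _ : Fin n => ν)
    (f := fun w => ∫⁻ s : Fin n → T,
      ENNReal.ofReal (|(∫ b, h b ∂(ν.prod μ)) - (1 / (n : ℝ)) * ∑ i, h (w i, s i)|
        + |(∫ b, k b ∂(ν.prod μ)) - (1 / (n : ℝ)) * ∑ i, k (w i, s i)|)
        ∂(Measure.pi fun _ => μ)) (by fun_prop)
  refine ⟨w, hw.trans (le_trans (le_of_eq ?_) H)⟩
  refine lintegral_congr fun w => lintegral_congr fun s => ?_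
  rw [ENNReal.ofReal_add (abs_nonneg _) (abs_nonneg _)]
  rfl

/-- Resampling one coordinate of an i.i.d. vector preserves its law. -/
theorem measurePreserving_update_pi {ι α : Type*} [Fintype ι] [DecidableEq ι] [MeasurableSpace α]
    (μ : Measure α) [IsProbabilityMeasure μ] (k : ι) :
    MeasurePreserving (fun p : (ι → α) × α => Function.update p.1 k p.2)
      ((Measure.pi fun _ => μ).prod μ) (Measure.pi fun _ => μ) := by
  have hmeas : Measurable fun p : (ι → α) × α => Function.update p.1 k p.2 := by fun_prop
  refine ⟨hmeas, (Measure.pi_eq fun s hs => ?_).symm⟩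
  rw [Measure.map_apply hmeas (MeasurableSet.univ_pi hs)]
  have : (fun p : (ι → α) × α => Function.update p.1 k p.2) ⁻¹' Set.univ.pi s
      = (Set.univ.pi (Function.update s k Set.univ)) ×ˢ s k := by
    ext ⟨x, a⟩
    simp only [Set.mem_preimage, Set.mem_univ_pi, Set.mem_prod]
    constructor
    · refine fun H => ⟨fun i => ?_, by simpa using H k⟩
      by_cases hi : i = k
      · subst hi; simp
      · simpa [hi] using H i
    · rintro ⟨H, ha⟩ i
      by_cases hi : i = k
      · subst hi; simpa using ha
      · simpa [hi] using H i
  rw [this, Measure.prod_prod, Measure.pi_pi, ← Finset.prod_erase_mul _ _ (Finset.mem_univ k),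
    ← Finset.prod_erase_mul (a := k) _ (fun i => μ (s i)) (Finset.mem_univ k)]
  simp only [Function.update_self, measure_univ, mul_one]
  congr 1
  refine Finset.prod_congr rfl fun i hi => ?_
  rw [Function.update_of_ne (Finset.ne_of_mem_erase hi)]

/-- The randomness of a single time instant: source, noise, encoder seed and decoder seed. -/
abbrev Letter : Type := ℝ × ℝ × ℝ × ℝ

/-- The law of the randomness of a single time instant. -/
def letterLaw (Q N : ℝ≥0) : Measure Letter :=
  (gaussianReal 0 Q).prod ((gaussianReal 0 N).prod ((gaussianReal 0 1).prod (gaussianReal 0 1)))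

instance (Q N : ℝ≥0) : IsProbabilityMeasure (letterLaw Q N) := by
  unfold letterLaw; infer_instance

/-- A sequence of single-time samples, regarded as a sample of the whole block. -/
def ofLetters {n : ℕ} (s : Fin n → Letter) : Sample n :=
  (fun i => (s i).1, fun i => (s i).2.1, fun i => (s i).2.2.1, fun i => (s i).2.2.2)

@[fun_prop]
theorem measurable_ofLetters {n : ℕ} : Measurable (ofLetters (n := n)) := by
  unfold ofLetters; fun_prop

theorem measurePreserving_ofLetters (n : ℕ) (Q N : ℝ≥0) :
    MeasurePreserving (ofLetters (n := n)) (Measure.pi fun _ => letterLaw Q N) (base n Q N) :=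
  (((MeasurePreserving.id _).prod
    (((MeasurePreserving.id _).prod (measurePreserving_arrowProdEquivProdArrow ℝ ℝ (Fin n)
      (fun _ => gaussianReal 0 1) (fun _ => gaussianReal 0 1))).comp
      (measurePreserving_arrowProdEquivProdArrow ℝ (ℝ × ℝ) (Fin n)
        (fun _ => gaussianReal 0 N) (fun _ => (gaussianReal 0 1).prod (gaussianReal 0 1))))).comp
    (measurePreserving_arrowProdEquivProdArrow ℝ (ℝ × ℝ × ℝ) (Fin n)
      (fun _ => gaussianReal 0 Q) (fun _ => (gaussianReal 0 N).prod
        ((gaussianReal 0 1).prod (gaussianReal 0 1)))) : )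

/-- A feedback control at time `t` depends on the source and the seeds up to time `t` and on the
noise strictly before `t`. -/
theorem fbCtrl_congr {n : ℕ} {enc : Fin n → Path n → Path n → ℝ → ℝ}
    (henc : ∀ (t : Fin n) (x x' y y' : Path n) (v : ℝ),
      (∀ s, s ≤ t → x s = x' s) → (∀ s, s < t → y s = y' s) → enc t x y v = enc t x' y' v)
    {x x' z z' v v' : Path n} (t : ℕ) (hx : ∀ s : Fin n, (s : ℕ) ≤ t → x s = x' s)
    (hz : ∀ s : Fin n, (s : ℕ) < t → z s = z' s) (hv : ∀ s : Fin n, (s : ℕ) ≤ t → v s = v' s) :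
    fbCtrl enc x z v t = fbCtrl enc x' z' v' t := by
  induction t using Nat.strong_induction_on with
  | _ t ih =>
    rw [fbCtrl, fbCtrl]
    split_ifs with ht
    · rw [hv ⟨t, ht⟩ le_rfl]
      refine henc _ _ _ _ _ _ (fun s hs => hx s hs) fun s hs => ?_
      have hs' : (s : ℕ) < t := hs
      rw [dif_pos hs', dif_pos hs', hx s hs'.le, hz s hs',
        ih s hs' (fun r hr => hx r (hr.trans hs'.le)) (fun r hr => hz r (hr.trans hs'))
          (fun r hr => hv r (hr.trans hs'.le))]
    · rfl

theorem measurable_fbCtrl {n : ℕ} {enc : Fin n → Path n → Path n → ℝ → ℝ}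
    (henc : ∀ t, Measurable fun p : (Path n × Path n) × ℝ => enc t p.1.1 p.1.2 p.2) (t : ℕ) :
    Measurable fun ω : Sample n => fbCtrl enc (srcX0 ω) (noiseZ ω) (seedV ω) t := by
  induction t using Nat.strong_induction_on with
  | _ t ih =>
    by_cases ht : t < n
    · have hpast : Measurable fun (ω : Sample n) (s : Fin n) => if (s : ℕ) < t then
          srcX0 ω s + fbCtrl enc (srcX0 ω) (noiseZ ω) (seedV ω) s + noiseZ ω s else 0 := by
        refine measurable_pi_lambda _ fun s => ?_
        by_cases hs : (s : ℕ) < t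
        · simp only [hs, if_true]
          have := ih s hs
          unfold srcX0 noiseZ at *
          fun_prop
        · simp only [hs, if_false]
          exact measurable_const
      have harg : Measurable fun ω : Sample n => (srcX0 ω, (fun s : Fin n => if (s : ℕ) < t then
          srcX0 ω s + fbCtrl enc (srcX0 ω) (noiseZ ω) (seedV ω) s + noiseZ ω s else 0)) :=
        measurable_fst.prodMk hpast
      have hseed : Measurable fun ω : Sample n => seedV ω ⟨t, ht⟩ := by
        unfold seedV; fun_prop
      have := (henc ⟨t, ht⟩).comp (harg.prodMk hseed)
      convert this using 2 with ω
      rw [fbCtrl, dif_pos ht]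
      simp
    · have : ∀ ω : Sample n, fbCtrl enc (srcX0 ω) (noiseZ ω) (seedV ω) t = 0 := fun ω => by
        rw [fbCtrl, dif_neg ht]
      simp only [this]
      exact measurable_const

namespace FBFFDesign

variable {m : ℕ} (c : FBFFDesign m)

@[fun_prop]
theorem measurable_U1 : Measurable c.U1 :=
  measurable_pi_lambda _ fun t => measurable_fbCtrl c.enc_meas t

@[fun_prop]
theorem measurable_X1 : Measurable c.X1 := by
  have := c.measurable_U1
  unfold X1 srcX0
  fun_prop

@[fun_prop]
theorem measurable_Y1 : Measurable c.Y1 := by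
  have := c.measurable_X1
  unfold Y1 noiseZ
  fun_prop

@[fun_prop]
theorem measurable_U2 : Measurable c.U2 := by
  refine measurable_pi_lambda _ fun t => ?_
  have hseed : Measurable fun ω : Sample m => seedW ω t := by
    unfold seedW; fun_prop
  exact (c.dec_meas t).comp ((c.measurable_Y1.prodMk measurable_fst).prodMk hseed)

/-- Resampling the randomness at time `k` does not change the controls before time `k`, and the
new noise and decoder seed do not influence the control at time `k`. -/
theorem U1_update_congr (σ : Fin m → Letter) (k t : Fin m) (a a' : Letter) (ht : t ≤ k)
    (h : t = k → a.1 = a'.1 ∧ a.2.2.1 = a'.2.2.1) :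
    c.U1 (ofLetters (Function.update σ k a)) t = c.U1 (ofLetters (Function.update σ k a')) t := by
  have hne : ∀ s : Fin m, (s : ℕ) ≤ t → s = k → t = k := fun s hs hk =>
    le_antisymm ht (hk ▸ hs)
  refine fbCtrl_congr c.enc_causal t (fun s hs => ?_) (fun s hs => ?_) (fun s hs => ?_)
  · by_cases hk : s = k
    · subst hk; simp [ofLetters, srcX0, (h (hne s hs rfl)).1]
    · simp [ofLetters, srcX0, hk]
  · have hk : s ≠ k := fun hk => absurd (lt_of_lt_of_le hs (Fin.le_def.1 ht)) (by simp [hk])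
    simp [ofLetters, noiseZ, hk]
  · by_cases hk : s = k
    · subst hk; simp [ofLetters, seedV, (h (hne s hs rfl)).2]
    · simp [ofLetters, seedV, hk]

theorem Y1_update_of_lt (σ : Fin m → Letter) {k t : Fin m} (a : Letter) (ht : t < k) :
    c.Y1 (ofLetters (Function.update σ k a)) t = c.Y1 (ofLetters σ) t := by
  have h := c.U1_update_congr σ k t a (σ k) ht.le (fun h => absurd h ht.ne)
  rw [Function.update_eq_self] at h
  simp only [Y1, X1, h]
  simp [ofLetters, srcX0, noiseZ, ht.ne]

/-- The memoryless design that at time `t` simulates time `(w t).1` of a feedback design, with the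
past of the latter frozen to the sample `(w t).2`. -/
def memoryless {n : ℕ} (w : Fin n → Fin m × (Fin m → Letter)) : Design n where
  enc t x v := c.U1 (ofLetters (Function.update (w t).2 (w t).1 (x t, 0, v, 0))) (w t).1
  dec t y r := c.dec (w t).1 (Function.update (c.Y1 (ofLetters (w t).2)) (w t).1 (y t))
    (srcX0 (ofLetters (w t).2)) r
  enc_meas t := by fun_prop
  dec_meas t := (c.dec_meas (w t).1).comp (((by fun_prop : Measurable fun p : Path n × ℝ =>
    Function.update (c.Y1 (ofLetters (w t).2)) (w t).1 (p.1 t)).prodMk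
      measurable_const).prodMk measurable_snd)
  enc_causal t x x' v h := by simp only [h t le_rfl]
  dec_causal t y y' r h := by simp only [h t le_rfl]

variable {n : ℕ} (w : Fin n → Fin m × (Fin m → Letter)) (s : Fin n → Letter) (t : Fin n)

theorem memoryless_U1 : (c.memoryless w).U1 (ofLetters s) t
    = c.U1 (ofLetters (Function.update (w t).2 (w t).1 (s t))) (w t).1 :=
  c.U1_update_congr _ _ _ _ _ le_rfl fun _ => ⟨rfl, rfl⟩

theorem memoryless_X1 : (c.memoryless w).X1 (ofLetters s) t
    = c.X1 (ofLetters (Function.update (w t).2 (w t).1 (s t))) (w t).1 := by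
  simp only [Design.X1, X1, memoryless_U1]
  simp [ofLetters, srcX0]

theorem memoryless_U2 : (c.memoryless w).U2 (ofLetters s) t
    = c.U2 (ofLetters (Function.update (w t).2 (w t).1 (s t))) (w t).1 := by
  have hseed : seedW (ofLetters s) t
      = seedW (ofLetters (Function.update (w t).2 (w t).1 (s t))) (w t).1 := by
    simp [ofLetters, seedW]
  simp only [Design.U2, U2, memoryless, hseed]
  refine c.dec_causal _ _ _ _ _ _ (fun r hr => ?_) fun r hr => ?_
  · rcases hr.lt_or_eq with hr | rfl
    · rw [Function.update_of_ne hr.ne, c.Y1_update_of_lt _ _ hr]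
    · have := c.memoryless_X1 w s t
      simp only [Function.update_self]
      change (c.memoryless w).X1 (ofLetters s) t + _ = c.X1 _ _ + _
      rw [this]
      simp [ofLetters, noiseZ]
  · simp [ofLetters, srcX0, hr.ne]

end FBFFDesign

/-- If `f` is `L¹`-close to the constant `P`, then it is integrable with mean close to `P`. -/
theorem integrable_and_abs_sub_integral_le {α : Type*} [MeasurableSpace α] {μ : Measure α}
    [IsProbabilityMeasure μ] {f : α → ℝ} (hf : Measurable f) {P ε : ℝ} (hε : 0 ≤ ε)
    (h : ∫⁻ a, ENNReal.ofReal |P - f a| ∂μ ≤ ENNReal.ofReal ε) :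
    Integrable f μ ∧ |P - ∫ a, f a ∂μ| ≤ ε := by
  have hint : Integrable (fun a => P - f a) μ := by
    refine ⟨by fun_prop, ?_⟩
    simp only [HasFiniteIntegral, Real.enorm_eq_ofReal_abs]
    exact h.trans_lt ENNReal.ofReal_lt_top
  have hfi : Integrable f μ := by
    simpa [Pi.sub_def] using (integrable_const P).sub hint
  refine ⟨hfi, ?_⟩
  have : P - ∫ a, f a ∂μ = ∫ a, (P - f a) ∂μ := by
    rw [integral_sub (integrable_const P) hfi]; simp
  rw [this]
  refine abs_integral_le_integral_abs.trans ?_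
  rw [integral_eq_lintegral_of_nonneg_ae (.of_forall fun _ => abs_nonneg _) (by fun_prop)]
  exact ENNReal.toReal_le_of_le_ofReal hε h

/-- Averaging over a uniform time index and resampling the randomness at that time does not change
the mean of a block average. -/
theorem integrable_and_integral_update {m : ℕ} [NeZero m] {α : Type*} [MeasurableSpace α]
    (μ : Measure α) [IsProbabilityMeasure μ] {F : Fin m → (Fin m → α) → ℝ}
    (hF : ∀ k, Measurable (F k)) (hpos : ∀ k s, 0 ≤ F k s)
    (hi : Integrable (fun s => (1 / (m : ℝ)) * ∑ k, F k s) (Measure.pi fun _ => μ)) :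
    Measurable (fun p : (Fin m × (Fin m → α)) × α => F p.1.1 (Function.update p.1.2 p.1.1 p.2)) ∧
    Integrable (fun p : (Fin m × (Fin m → α)) × α => F p.1.1 (Function.update p.1.2 p.1.1 p.2))
      (((PMF.uniformOfFintype (Fin m)).toMeasure.prod (Measure.pi fun _ => μ)).prod μ) ∧
    ∫ p : (Fin m × (Fin m → α)) × α, F p.1.1 (Function.update p.1.2 p.1.1 p.2)
      ∂(((PMF.uniformOfFintype (Fin m)).toMeasure.prod (Measure.pi fun _ => μ)).prod μ)
      = ∫ s, (1 / (m : ℝ)) * ∑ k, F k s ∂(Measure.pi fun _ => μ) := by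
  have hm : (0 : ℝ) < m := by exact_mod_cast NeZero.pos m
  set u := (PMF.uniformOfFintype (Fin m)).toMeasure
  set π : Measure (Fin m → α) := Measure.pi fun _ => μ
  have hFm : Measurable fun q : Fin m × ((Fin m → α) × α) =>
      F q.1 (Function.update q.2.1 q.1 q.2.2) :=
    measurable_from_prod_countable_right fun k =>
      (hF k).comp (measurePreserving_update_pi μ k).measurable
  have hmeas : Measurable fun p : (Fin m × (Fin m → α)) × α =>
      F p.1.1 (Function.update p.1.2 p.1.1 p.2) :=
    hFm.comp MeasurableEquiv.prodAssoc.measurable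
  have hFi : ∀ k, Integrable (F k) π := fun k => by
    refine (hi.const_mul (m : ℝ)).mono' (hF k).aestronglyMeasurable (.of_forall fun s => ?_)
    rw [Real.norm_of_nonneg (hpos k s), ← mul_assoc, mul_one_div_cancel hm.ne', one_mul]
    exact Finset.single_le_sum (fun j _ => hpos j s) (Finset.mem_univ k)
  have hassoc : MeasurePreserving MeasurableEquiv.prodAssoc ((u.prod π).prod μ)
      (u.prod (π.prod μ)) := measurePreserving_prodAssoc u π μ
  have hFi' : Integrable (fun q : Fin m × ((Fin m → α) × α) =>
      F q.1 (Function.update q.2.1 q.1 q.2.2)) (u.prod (π.prod μ)) := by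
    rw [integrable_prod_iff hFm.aestronglyMeasurable]
    exact ⟨.of_forall fun k => (measurePreserving_update_pi μ k).integrable_comp_of_integrable
      (hFi k), .of_finite⟩
  refine ⟨hmeas, hassoc.integrable_comp_of_integrable hFi', ?_⟩
  have hchange := hassoc.integral_comp' (fun q : Fin m × ((Fin m → α) × α) =>
      F q.1 (Function.update q.2.1 q.1 q.2.2))
  refine hchange.trans ?_
  rw [integral_prod _ hFi', PMF.integral_eq_sum, integral_const_mul,
    integral_finsetSum _ fun k _ => hFi k, Finset.mul_sum]
  refine Finset.sum_congr rfl fun k _ => ?_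
  have hup : ∫ p : (Fin m → α) × α, F k (Function.update p.1 k p.2) ∂(π.prod μ)
      = ∫ s, F k s ∂π := by
    have hk : MeasurePreserving _ (π.prod μ) π := measurePreserving_update_pi μ k
    conv_rhs => rw [← hk.map_eq]
    rw [integral_map hk.measurable.aemeasurable (hF k).aestronglyMeasurable]
  simp [hup]

/-- The costs of a feedback design are approximated, for all large blocklengths, by the costs of
designs without feedback. -/
theorem FBFFDesign.exists_design_lintegral_le {m : ℕ} [NeZero m] (c : FBFFDesign m) {Q N : ℝ≥0}
    {P S ε : ℝ} (hε : 0 < ε)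
    (hc : ∫⁻ ω, ENNReal.ofReal (|P - costP (c.U1 ω)| + |S - costS (c.X1 ω) (c.U2 ω)|)
      ∂(base m Q N) ≤ ENNReal.ofReal ε) :
    ∃ n₀ : ℕ, ∀ n ≥ n₀, ∃ d : Design n,
      ∫⁻ ω, ENNReal.ofReal (|P - costP (d.U1 ω)| + |S - costS (d.X1 ω) (d.U2 ω)|)
        ∂(base n Q N) ≤ ENNReal.ofReal (3 * ε) := by
  have hE := measurePreserving_ofLetters m Q N
  have hmP : Measurable fun ω : Sample m => costP (c.U1 ω) := by unfold costP; fun_prop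
  have hmS : Measurable fun ω : Sample m => costS (c.X1 ω) (c.U2 ω) := by unfold costS; fun_prop
  rw [← hE.map_eq, lintegral_map (by fun_prop) hE.measurable] at hc
  have hcP : ∫⁻ s, ENNReal.ofReal |P - costP (c.U1 (ofLetters s))|
      ∂(Measure.pi fun _ => letterLaw Q N) ≤ ENNReal.ofReal ε :=
    (lintegral_mono fun s => ENNReal.ofReal_le_ofReal
      (le_add_of_nonneg_right (abs_nonneg _))).trans hc
  have hcS : ∫⁻ s, ENNReal.ofReal |S - costS (c.X1 (ofLetters s)) (c.U2 (ofLetters s))|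
      ∂(Measure.pi fun _ => letterLaw Q N) ≤ ENNReal.ofReal ε :=
    (lintegral_mono fun s => ENNReal.ofReal_le_ofReal
      (le_add_of_nonneg_left (abs_nonneg _))).trans hc
  obtain ⟨hiP, hdP⟩ := integrable_and_abs_sub_integral_le (hmP.comp hE.measurable) hε.le hcP
  obtain ⟨hiS, hdS⟩ := integrable_and_abs_sub_integral_le (hmS.comp hE.measurable) hε.le hcS
  obtain ⟨hhm, hhi, hh⟩ := integrable_and_integral_update (letterLaw Q N)
    (F := fun k s => (c.U1 (ofLetters s) k) ^ 2) (fun k => by fun_prop)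
    (fun _ _ => sq_nonneg _) hiP
  obtain ⟨hkm, hki, hk⟩ := integrable_and_integral_update (letterLaw Q N)
    (F := fun k s => (c.X1 (ofLetters s) k - c.U2 (ofLetters s) k) ^ 2) (fun k => by fun_prop)
    (fun _ _ => sq_nonneg _) hiS
  obtain ⟨n₀, hn₀⟩ := exists_parameters_lintegral_average_le _ _ hhm hkm hhi hki hε
  refine ⟨n₀, fun n hn => ?_⟩
  obtain ⟨w, hw⟩ := hn₀ n hn
  refine ⟨c.memoryless w, ?_⟩
  rw [hh, hk] at hw
  have hsplit : ENNReal.ofReal (3 * ε) = ENNReal.ofReal (2 * ε) + ENNReal.ofReal ε := by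
    rw [← ENNReal.ofReal_add (by positivity) hε.le]; congr 1; ring
  rw [← (measurePreserving_ofLetters n Q N).map_eq, hsplit]
  refine (lintegral_map_le _ _).trans (le_trans ?_ (add_le_add_right hw _))
  have hconst : ENNReal.ofReal (2 * ε) = ∫⁻ _ : Fin n → Letter, ENNReal.ofReal (2 * ε)
      ∂(Measure.pi fun _ => letterLaw Q N) := by simp
  rw [hconst, ← lintegral_add_left measurable_const]
  refine lintegral_mono fun s => ?_
  rw [← ENNReal.ofReal_add (by positivity) (by positivity)]
  refine ENNReal.ofReal_le_ofReal ?_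
  simp only [costP, costS, c.memoryless_U1, c.memoryless_X1, c.memoryless_U2]
  simp only [costP, costS, Function.comp_apply] at hdP hdS
  exact (add_le_add ((abs_sub_le P _ _).trans (add_le_add_left hdP _))
    ((abs_sub_le S _ _).trans (add_le_add_left hdS _))).trans (le_of_eq (by ring))

/-- Feedback and feed-forward do not enlarge the achievable region. -/
theorem achievable_of_achievableFBFF {Q N : ℝ≥0} {P S : ℝ} (h : achievableFBFF Q N P S) :
    achievable Q N P S := by
  intro ε hε
  obtain ⟨m, hm⟩ := h (ε / 3) (by positivity)
  obtain ⟨c, hc⟩ := hm (m + 1) (Nat.le_succ m)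
  have := c.exists_design_lintegral_le (by positivity) hc
  rwa [mul_div_cancel₀ ε three_ne_zero] at this

theorem achievableFB_of_achievable {Q N : ℝ≥0} {P S : ℝ} (h : achievable Q N P S) :
    achievableFB Q N P S := by
  intro ε hε
  obtain ⟨n₀, hn₀⟩ := h ε hε
  refine ⟨n₀, fun n hn => ?_⟩
  obtain ⟨c, hc⟩ := hn₀ n hn
  let d : FBDesign n :=
    { enc := fun t x _ v => c.enc t x v
      dec := c.dec
      enc_meas := fun t => (c.enc_meas t).comp (by fun_prop :
        Measurable fun p : (Path n × Path n) × ℝ => (p.1.1, p.2))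
      dec_meas := c.dec_meas
      enc_causal := fun t x x' _ _ v hx _ => c.enc_causal t x x' v hx
      dec_causal := c.dec_causal }
  have hU1 : d.U1 = c.U1 := by
    funext ω t
    simp only [FBDesign.U1, Design.U1]
    rw [fbCtrl, dif_pos t.2]
  have hX1 : d.X1 = c.X1 := by
    funext ω t
    simp only [FBDesign.X1, Design.X1, hU1]
  have hU2 : d.U2 = c.U2 := by
    funext ω t
    change c.dec t (fun s => d.X1 ω s + noiseZ ω s) _ = c.dec t (fun s => c.X1 ω s + noiseZ ω s) _
    rw [hX1]
  exact ⟨d, by rwa [hU1, hX1, hU2]⟩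

theorem achievableFBFF_of_achievableFB {Q N : ℝ≥0} {P S : ℝ} (h : achievableFB Q N P S) :
    achievableFBFF Q N P S := by
  intro ε hε
  obtain ⟨n₀, hn₀⟩ := h ε hε
  refine ⟨n₀, fun n hn => ?_⟩
  obtain ⟨c, hc⟩ := hn₀ n hn
  exact ⟨{ enc := c.enc
           dec := fun t y _ w => c.dec t y w
           enc_meas := c.enc_meas
           dec_meas := fun t => (c.dec_meas t).comp (by fun_prop :
             Measurable fun p : (Path n × Path n) × ℝ => (p.1.1, p.2))
           enc_causal := c.enc_causal
           dec_causal := fun t y y' _ _ w hy _ => c.dec_causal t y y' w hy }, hc⟩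

/-- **Genie-aided equality** (Appendix B): the region `R_{ed,f,f}` of achievable cost pairs
when the causal encoder has strictly causal channel feedback `Y₁^{t-1}` and the causal decoder
additionally receives the strictly causal source feed-forward `X₀^{t-1}` equals the region
`R_ed` without feedback or feed-forward.  In particular `R_ed ⊆ R_{ed,f} ⊆ R_{ed,f,f}`, so
adding channel feedback and source feed-forward does not enlarge the achievable region. -/
theorem genie_aided_region_eq (Q N : ℝ≥0) (hQ : 0 < Q) (hN : 0 < N) :
    (∀ P S : ℝ, achievableFBFF Q N P S ↔ achievable Q N P S) ∧
    (∀ P S : ℝ, achievable Q N P S → achievableFB Q N P S) ∧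
    (∀ P S : ℝ, achievableFB Q N P S → achievableFBFF Q N P S) :=
  ⟨fun _ _ => ⟨achievable_of_achievableFBFF,
      fun h => achievableFBFF_of_achievableFB (achievableFB_of_achievable h)⟩,
    fun _ _ => achievableFB_of_achievable, fun _ _ => achievableFBFF_of_achievableFB⟩

end

end Witsenhausen
end

section
/- Converse structural lemma with feedback and feed-forward (Appendix B): Let n ∈ ℕ and let c ∈ C_{ed,f,f}(n) be any control design in which the causal encoder at time t observes (X_0^t, Y_1^{t−1}) and the causal decoder at time t observes (Y_1^t, X_0^{t−1}). Let Q be uniform on {1,…,n}, independent of all other variables, define X_0 = X_{0,Q}, U_1 = U_{1,Q}, X_1 = X_{1,Q}, Y_1 = Y_{1,Q}, U_2 = U_{2,Q}, and the auxiliary random variable T = ((X_0^{Q−1}, Y_1^{Q−1}), Q). Then: (i) X_0 is independent of T; (ii) (X_1, Y_1) is conditionally independent of T given (X_0, U_1), with conditional law given by the Witsenhausen channel; and (iii) U_2 is conditionally independent of (X_0, U_1, X_1) given (T, Y_1). Consequently the single-letter joint distribution of (X_0, T, U_1, X_1, Y_1, U_2) decomposes as P_{X_0} P_T P_{U_1|X_0,T}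 P_{X_1,Y_1|X_0,U_1} P_{U_2|T,Y_1}. -/
/-!
Formalization of results from "Causal Vector-valued Witsenhausen Counterexamples with
Feedback" (Zhao, Le Treust, Oechtering).

Stochastic encoders/decoders (stochastic kernels) are realized as measurable functions of
independent i.i.d. randomization seeds, which is equivalent to the kernel formulation on
standard Borel spaces.
-/

open MeasureTheory ProbabilityTheory
open scoped ENNReal NNReal

namespace Witsenhausen

noncomputable section

/-- A single-letter joint distribution of `(X₀, T, U₁, X₁, Y₁, U₂)` decomposing according to
`P_{X₀} P_T P_{U₁|X₀,T} P_{X₁,Y₁|X₀,U₁} P_{U₂|T,Y₁}`: it is described by the distribution of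
the time-sharing variable `T` (independent of `X₀ ~ N(0,Q)`), the conditional kernel
`P_{U₁|X₀,T}`, and the conditional kernel `P_{U₂|T,Y₁}`; the Witsenhausen channel
`P_{X₁,Y₁|X₀,U₁}` is fixed. -/
structure SLDecomp (Q N : ℝ≥0) (T : Type) [MeasurableSpace T] where
  /-- the distribution `P_T` of the time-sharing variable -/
  μT : Measure T
  probT : IsProbabilityMeasure μT
  /-- the conditional distribution `P_{U₁|X₀,T}` -/
  κ1 : Kernel (ℝ × T) ℝ
  markov1 : IsMarkovKernel κ1
  /-- the conditional distribution `P_{U₂|T,Y₁}` -/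
  κ2 : Kernel (T × ℝ) ℝ
  markov2 : IsMarkovKernel κ2

attribute [instance] SLDecomp.probT SLDecomp.markov1 SLDecomp.markov2

namespace SLDecomp

/-- canonical coordinates `((((X₀, T), U₁), Z₁), U₂)` -/
abbrev Space (T : Type) : Type := (((ℝ × T) × ℝ) × ℝ) × ℝ

variable {Q N : ℝ≥0} {T : Type} [MeasurableSpace T]

def sX0 (q : Space T) : ℝ := q.1.1.1.1
def sT (q : Space T) : T := q.1.1.1.2
def sU1 (q : Space T) : ℝ := q.1.1.2
def sZ (q : Space T) : ℝ := q.1.2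
def sU2 (q : Space T) : ℝ := q.2
def sX1 (q : Space T) : ℝ := sX0 q + sU1 q
def sY1 (q : Space T) : ℝ := sX1 q + sZ q

/-- The joint law `P_{X₀} P_T P_{U₁|X₀,T} P_{X₁,Y₁|X₀,U₁} P_{U₂|T,Y₁}` on the canonical
space: `(X₀, T) ~ N(0,Q) ⊗ P_T`, then `U₁ ~ P_{U₁|X₀,T}`, then the memoryless Witsenhausen
channel is realized by an independent noise `Z₁ ~ N(0,N)` through `X₁ = X₀ + U₁` and
`Y₁ = X₁ + Z₁`, and finally `U₂ ~ P_{U₂|T,Y₁}`. -/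
def measure (d : SLDecomp Q N T) : Measure (Space T) :=
  ((((gaussianReal 0 Q).prod d.μT) ⊗ₘ d.κ1).prod (gaussianReal 0 N)) ⊗ₘ
    (d.κ2.comap (fun q : ((ℝ × T) × ℝ) × ℝ => (q.1.1.2, q.1.1.1 + q.1.2 + q.2))
      (by fun_prop))

instance (d : SLDecomp Q N T) : IsProbabilityMeasure d.measure := by
  unfold measure; infer_instance

/-- The induced single-letter joint law of `(X₀, T, U₁, X₁, Y₁, U₂)`. -/
def joint (d : SLDecomp Q N T) : Measure (ℝ × T × ℝ × ℝ × ℝ × ℝ) :=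
  d.measure.map (fun q => (sX0 q, sT q, sU1 q, sX1 q, sY1 q, sU2 q))

/-- The pair `(P, S)` consists of the expected single-letter Witsenhausen costs of the
decomposed distribution: `P = E[U₁²]` and `S = E[(X₁ - U₂)²]` (both finite). -/
def realizes (d : SLDecomp Q N T) (P S : ℝ) : Prop :=
  Integrable (fun q => (sU1 q) ^ 2) d.measure ∧
  Integrable (fun q => (sX1 q - sU2 q) ^ 2) d.measure ∧
  P = ∫ q, (sU1 q) ^ 2 ∂d.measure ∧
  S = ∫ q, (sX1 q - sU2 q) ^ 2 ∂d.measure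

end SLDecomp

/-- The memoryless Witsenhausen channel `P_{X₁,Y₁|X₀,U₁}`, mapping `(x₀, u₁)` to the joint law
of `(X₁, Y₁) = (x₀ + u₁, x₀ + u₁ + Z₁)` with `Z₁ ~ N(0,N)`. -/
def witChannel (N : ℝ≥0) : Kernel (ℝ × ℝ) (ℝ × ℝ) :=
  ((Kernel.id : Kernel (ℝ × ℝ) (ℝ × ℝ)) ⊗ₖ Kernel.const _ (gaussianReal 0 N)).map
    (fun q => (q.1.1 + q.1.2, q.1.1 + q.1.2 + q.2))

/-- The uniform random time `Q ~ Unif{1, …, n}`. -/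
def uniformTime (n : ℕ) [NeZero n] : Measure (Fin n) :=
  (PMF.uniformOfFintype (Fin n)).toMeasure

instance (n : ℕ) [NeZero n] : IsProbabilityMeasure (uniformTime n) := by
  unfold uniformTime; infer_instance

/-- Sample space extended by the independent uniform random time. -/
abbrev TimedSample (n : ℕ) : Type := Sample n × Fin n

/-- The base randomness extended by an independent uniform random time. -/
def timedBase (n : ℕ) [NeZero n] (Q N : ℝ≥0) : Measure (TimedSample n) :=
  (base n Q N).prod (uniformTime n)

instance (n : ℕ) [NeZero n] (Q N : ℝ≥0) : IsProbabilityMeasure (timedBase n Q N) := by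
  unfold timedBase; infer_instance

namespace FBFFDesign

variable {n : ℕ} (c : FBFFDesign n)

/-- The single-letter source symbol `X₀ = X_{0,Q}` at the random time. -/
def tX0 (_c : FBFFDesign n) (ω : TimedSample n) : ℝ := srcX0 ω.1 ω.2
/-- The single-letter control `U₁ = U_{1,Q}`. -/
def tU1 (ω : TimedSample n) : ℝ := c.U1 ω.1 ω.2
/-- The single-letter interim state `X₁ = X_{1,Q}`. -/
def tX1 (ω : TimedSample n) : ℝ := c.X1 ω.1 ω.2
/-- The single-letter channel output `Y₁ = Y_{1,Q}`. -/
def tY1 (ω : TimedSample n) : ℝ := c.Y1 ω.1 ω.2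
/-- The single-letter estimate `U₂ = U_{2,Q}`. -/
def tU2 (ω : TimedSample n) : ℝ := c.U2 ω.1 ω.2
/-- The auxiliary random variable `T = ((X₀^{Q-1}, Y₁^{Q-1}), Q)`, where the strict prefixes
are encoded as paths padded with `0` from time `Q` on. -/
def tT (ω : TimedSample n) : (Path n × Path n) × Fin n :=
  ((fun s => if (s : ℕ) < (ω.2 : ℕ) then srcX0 ω.1 s else 0,
    fun s => if (s : ℕ) < (ω.2 : ℕ) then c.Y1 ω.1 s else 0), ω.2)

end FBFFDesign

section General

variable {Ω α β γ : Type*} [MeasurableSpace Ω] [MeasurableSpace α] [MeasurableSpace β]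
  [MeasurableSpace γ]

/-- The kernel sending `a` to the law of `φ (a, Z)` with `Z ~ ν`. -/
def noiseKernel (ν : Measure γ) (φ : α × γ → β) : Kernel α β :=
  (Kernel.id ×ₖ Kernel.const α ν).map φ

lemma noiseKernel_apply (ν : Measure γ) [IsProbabilityMeasure ν] {φ : α × γ → β}
    (hφ : Measurable φ) (a : α) :
    noiseKernel ν φ a = ν.map (fun z => φ (a, z)) := by
  rw [noiseKernel, Kernel.map_apply _ hφ, Kernel.prod_apply, Kernel.id_apply, Kernel.const_apply,
    Measure.dirac_prod, Measure.map_map hφ (by fun_prop)]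
  rfl

lemma isMarkovKernel_noiseKernel (ν : Measure γ) [IsProbabilityMeasure ν] {φ : α × γ → β}
    (hφ : Measurable φ) : IsMarkovKernel (noiseKernel ν φ) :=
  Kernel.IsMarkovKernel.map _ hφ

/-- If `Z` is independent of `A`, then the law of `φ (A, Z)` given `A = a` is the law of
`φ (a, Z)`. -/
lemma map_prodMk_eq_compProd {μ : Measure Ω} [IsProbabilityMeasure μ] {A : Ω → α} {Z : Ω → γ}
    (hA : Measurable A) (hZ : Measurable Z) (h : IndepFun A Z μ) {φ : α × γ → β}
    (hφ : Measurable φ) {κ : Kernel α β} [IsMarkovKernel κ]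
    (hκ : ∀ a, κ a = (μ.map Z).map (fun z => φ (a, z))) :
    μ.map (fun ω => (A ω, φ (A ω, Z ω))) = μ.map A ⊗ₘ κ := by
  have := Measure.isProbabilityMeasure_map (μ := μ) hA.aemeasurable
  have := Measure.isProbabilityMeasure_map (μ := μ) hZ.aemeasurable
  have hm : Measurable (fun p : α × γ => (p.1, φ p)) := by fun_prop
  have hcomp : (fun ω => (A ω, φ (A ω, Z ω))) = (fun p : α × γ => (p.1, φ p)) ∘
      fun ω => (A ω, Z ω) := rfl
  rw [hcomp, ← Measure.map_map hm (by fun_prop), h.map_prod_eq_prod_map_map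
    hA.aemeasurable hZ.aemeasurable]
  ext s hs
  rw [Measure.map_apply hm hs, Measure.prod_apply (hm hs), Measure.compProd_apply hs]
  refine lintegral_congr fun a => ?_
  rw [hκ, Measure.map_apply (by fun_prop) (measurable_prodMk_left hs)]
  rfl

/-- If resampling by `r` preserves `μ`, leaves `f` unchanged and replaces `g` by the fresh
variable `a ~ ν`, then `f` and `g` are independent and `g ~ ν`. -/
lemma indepFun_and_map_eq_of_resample {μ : Measure Ω} [IsProbabilityMeasure μ] {ν : Measure α}
    [IsProbabilityMeasure ν] {r : Ω × α → Ω} (hr : MeasurePreserving r (μ.prod ν) μ)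
    {f : Ω → β} {g : Ω → α} (hf : Measurable f) (hg : Measurable g)
    (hfr : ∀ ω a, f (r (ω, a)) = f ω) (hgr : ∀ ω a, g (r (ω, a)) = a) :
    IndepFun f g μ ∧ μ.map g = ν := by
  have hg' : μ.map g = ν := by
    have hgr' : g ∘ r = Prod.snd := funext fun p => hgr p.1 p.2
    conv_lhs => rw [← hr.map_eq]
    rw [Measure.map_map hg hr.measurable, hgr', Measure.map_snd_prod]
    simp
  refine ⟨?_, hg'⟩
  rw [indepFun_iff_map_prod_eq_prod_map_map hf.aemeasurable hg.aemeasurable, hg']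
  have hfgr : (fun ω => (f ω, g ω)) ∘ r = Prod.map f id :=
    funext fun p => Prod.ext (hfr p.1 p.2) (hgr p.1 p.2)
  conv_lhs => rw [← hr.map_eq]
  rw [Measure.map_map (hf.prodMk hg) hr.measurable, hfgr,
    ← Measure.map_prod_map _ _ hf measurable_id, Measure.map_id]

lemma measurePreserving_update {n : ℕ} (μ : Measure ℝ) [IsProbabilityMeasure μ] (t : Fin n) :
    MeasurePreserving (fun p : (Fin n → ℝ) × ℝ => Function.update p.1 t p.2)
      ((Measure.pi fun _ => μ).prod μ) (Measure.pi fun _ => μ) := by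
  have hm : Measurable (fun p : (Fin n → ℝ) × ℝ => Function.update p.1 t p.2) := by
    refine measurable_pi_iff.2 fun s => ?_
    by_cases h : s = t
    · subst h; simpa using measurable_snd
    · simp only [Function.update_of_ne h]; fun_prop
  refine ⟨hm, (Measure.pi_eq fun s hs => ?_).symm⟩
  rw [Measure.map_apply hm (MeasurableSet.univ_pi hs)]
  have hpre : (fun p : (Fin n → ℝ) × ℝ => Function.update p.1 t p.2) ⁻¹' Set.univ.pi s =
      (Set.univ.pi (Function.update s t Set.univ)) ×ˢ s t := by
    ext p
    simp only [Set.mem_preimage, Set.mem_univ_pi, Set.mem_prod]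
    constructor
    · refine fun h => ⟨fun i => ?_, by simpa using h t⟩
      by_cases hi : i = t
      · subst hi; simp
      · simpa [hi] using h i
    · rintro ⟨h, ht⟩ i
      by_cases hi : i = t
      · subst hi; simpa using ht
      · simpa [hi] using h i
  rw [hpre, Measure.prod_prod, Measure.pi_pi, ← Finset.mul_prod_erase _ _ (Finset.mem_univ t),
    ← Finset.mul_prod_erase Finset.univ (fun i => μ (s i)) (Finset.mem_univ t)]
  have hne : ∏ i ∈ Finset.univ.erase t, μ (Function.update s t Set.univ i) =
      ∏ i ∈ Finset.univ.erase t, μ (s i) :=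
    Finset.prod_congr rfl fun i hi => by rw [Function.update_of_ne (Finset.ne_of_mem_erase hi)]
  rw [hne]
  simp [mul_comm]

lemma measurePreserving_prod_right {μ : Measure α} {μ' : Measure β} {ν : Measure γ}
    [SFinite μ] [SFinite μ'] [SFinite ν] {f : β × γ → β}
    (hf : MeasurePreserving f (μ'.prod ν) μ') :
    MeasurePreserving (fun p : (α × β) × γ => (p.1.1, f (p.1.2, p.2)))
      ((μ.prod μ').prod ν) (μ.prod μ') :=
  ((MeasurePreserving.id μ).prod hf).comp (measurePreserving_prodAssoc μ μ' ν)

lemma measurePreserving_prod_left {μ : Measure α} {μ' : Measure β} {ν : Measure γ}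
    [SFinite μ] [SFinite μ'] [SFinite ν] {f : α × γ → α}
    (hf : MeasurePreserving f (μ.prod ν) μ) :
    MeasurePreserving (fun p : (α × β) × γ => (f (p.1.1, p.2), p.1.2))
      ((μ.prod μ').prod ν) (μ.prod μ') :=
  (Measure.measurePreserving_swap.comp (measurePreserving_prod_right (μ := μ') hf)).comp
    (Measure.measurePreserving_swap.prod (MeasurePreserving.id ν))

lemma measurePreserving_prod_index {ι : Type*} [Countable ι] [MeasurableSpace ι]
    [MeasurableSingletonClass ι] {μ : Measure α} {u : Measure ι} {ν : Measure γ}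
    [SFinite μ] [SFinite u] [SFinite ν] {f : ι → α × γ → α}
    (hf : ∀ i, MeasurePreserving (f i) (μ.prod ν) μ) :
    MeasurePreserving (fun p : (α × ι) × γ => (f p.1.2 (p.1.1, p.2), p.1.2))
      ((μ.prod u).prod ν) (μ.prod u) := by
  have h := MeasurePreserving.skew_product (MeasurePreserving.id u) (g := f)
    (measurable_from_prod_countable_right fun i => (hf i).measurable)
    (Filter.Eventually.of_forall fun i => (hf i).map_eq)
  exact (Measure.measurePreserving_swap.comp h).comp
    ((measurePreserving_prodAssoc u μ ν).comp
      (Measure.measurePreserving_swap.prod (MeasurePreserving.id ν)))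

end General

section Resampling

variable {n : ℕ}

/-- Replace the source symbol at the random time. -/
def resampleX (p : TimedSample n × ℝ) : TimedSample n :=
  ((Function.update p.1.1.1 p.1.2 p.2, p.1.1.2), p.1.2)

/-- Replace the channel noise at the random time. -/
def resampleZ (p : TimedSample n × ℝ) : TimedSample n :=
  ((p.1.1.1, Function.update p.1.1.2.1 p.1.2 p.2, p.1.1.2.2), p.1.2)

/-- Replace the encoder seed at the random time. -/
def resampleV (p : TimedSample n × ℝ) : TimedSample n :=
  ((p.1.1.1, p.1.1.2.1, Function.update p.1.1.2.2.1 p.1.2 p.2, p.1.1.2.2.2), p.1.2)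

/-- Replace the decoder seed at the random time. -/
def resampleW (p : TimedSample n × ℝ) : TimedSample n :=
  ((p.1.1.1, p.1.1.2.1, p.1.1.2.2.1, Function.update p.1.1.2.2.2 p.1.2 p.2), p.1.2)

variable [NeZero n] (Q N : ℝ≥0)

lemma measurePreserving_resampleX : MeasurePreserving (resampleX (n := n))
    ((timedBase n Q N).prod (gaussianReal 0 Q)) (timedBase n Q N) :=
  measurePreserving_prod_index
    (f := fun t (p : Sample n × ℝ) => (Function.update p.1.1 t p.2, p.1.2))
    fun t => measurePreserving_prod_left (measurePreserving_update (gaussianReal 0 Q) t)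

lemma measurePreserving_resampleZ : MeasurePreserving (resampleZ (n := n))
    ((timedBase n Q N).prod (gaussianReal 0 N)) (timedBase n Q N) :=
  measurePreserving_prod_index
    (f := fun t (p : Sample n × ℝ) => (p.1.1, Function.update p.1.2.1 t p.2, p.1.2.2))
    fun t => measurePreserving_prod_right <| measurePreserving_prod_left
      (measurePreserving_update (gaussianReal 0 N) t)

lemma measurePreserving_resampleV : MeasurePreserving (resampleV (n := n))
    ((timedBase n Q N).prod (gaussianReal 0 1)) (timedBase n Q N) :=
  measurePreserving_prod_index
    (f := fun t (p : Sample n × ℝ) =>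
      (p.1.1, p.1.2.1, Function.update p.1.2.2.1 t p.2, p.1.2.2.2))
    fun t => measurePreserving_prod_right <| measurePreserving_prod_right <|
      measurePreserving_prod_left (measurePreserving_update (gaussianReal 0 1) t)

lemma measurePreserving_resampleW : MeasurePreserving (resampleW (n := n))
    ((timedBase n Q N).prod (gaussianReal 0 1)) (timedBase n Q N) :=
  measurePreserving_prod_index
    (f := fun t (p : Sample n × ℝ) =>
      (p.1.1, p.1.2.1, p.1.2.2.1, Function.update p.1.2.2.2 t p.2))
    fun t => measurePreserving_prod_right <| measurePreserving_prod_right <|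
      measurePreserving_prod_right (measurePreserving_update (gaussianReal 0 1) t)

end Resampling

namespace FBFFDesign

variable {n : ℕ} (c : FBFFDesign n)

lemma fbCtrl_congr (t : ℕ) {x x' z z' v v' : Path n}
    (hx : ∀ s : Fin n, (s : ℕ) ≤ t → x s = x' s) (hz : ∀ s : Fin n, (s : ℕ) < t → z s = z' s)
    (hv : ∀ s : Fin n, (s : ℕ) ≤ t → v s = v' s) :
    fbCtrl c.enc x z v t = fbCtrl c.enc x' z' v' t := by
  induction t using Nat.strong_induction_on with
  | _ t ih =>
    rw [fbCtrl, fbCtrl]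
    split_ifs with ht
    · rw [hv ⟨t, ht⟩ le_rfl]
      refine c.enc_causal _ _ _ _ _ _ (fun s hs => hx s hs) fun s hs => ?_
      have hs' : (s : ℕ) < t := hs
      simp only [hs', dif_pos]
      rw [hx s hs'.le, hz s hs', ih s hs' (fun i hi => hx i (hi.trans hs'.le))
        (fun i hi => hz i (hi.trans hs')) (fun i hi => hv i (hi.trans hs'.le))]
    · rfl

lemma measurable_fbCtrl (t : ℕ) :
    Measurable fun ω : Sample n => fbCtrl c.enc (srcX0 ω) (noiseZ ω) (seedV ω) t := by
  induction t using Nat.strong_induction_on with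
  | _ t ih =>
    by_cases ht : t < n
    · have hx : Measurable (srcX0 (n := n)) := measurable_fst
      have hz : Measurable (noiseZ (n := n)) := measurable_snd.fst
      have hv : Measurable (seedV (n := n)) := measurable_snd.snd.fst
      have hy : Measurable fun ω : Sample n => fun s : Fin n =>
          if (s : ℕ) < t then srcX0 ω s + fbCtrl c.enc (srcX0 ω) (noiseZ ω) (seedV ω) s
            + noiseZ ω s else 0 := by
        refine measurable_pi_iff.2 fun s => ?_
        by_cases hs : (s : ℕ) < t
        · simp only [hs, if_true]
          have := ih s hs
          fun_prop
        · simp only [hs, if_false]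
          fun_prop
      have h := (c.enc_meas ⟨t, ht⟩).comp
        ((hx.prodMk hy).prodMk ((measurable_pi_apply (⟨t, ht⟩ : Fin n)).comp hv))
      convert! h using 2 with ω
      rw [fbCtrl, dif_pos ht]
      simp
    · have h0 : (fun ω : Sample n => fbCtrl c.enc (srcX0 ω) (noiseZ ω) (seedV ω) t) =
          fun _ => 0 := by
        funext ω
        rw [fbCtrl, dif_neg ht]
      rw [h0]
      exact measurable_const

/-- The channel noise at the random time. -/
def timedZ (ω : TimedSample n) : ℝ := noiseZ ω.1 ω.2
/-- The encoder seed at the random time. -/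
def timedV (ω : TimedSample n) : ℝ := seedV ω.1 ω.2
/-- The decoder seed at the random time. -/
def timedW (ω : TimedSample n) : ℝ := seedW ω.1 ω.2

lemma measurable_tX0 : Measurable c.tX0 :=
  measurable_from_prod_countable_left fun t => (measurable_pi_apply t).comp measurable_fst

lemma measurable_timedZ : Measurable (timedZ (n := n)) :=
  measurable_from_prod_countable_left fun t => (measurable_pi_apply t).comp measurable_snd.fst

lemma measurable_timedV : Measurable (timedV (n := n)) :=
  measurable_from_prod_countable_left fun t =>
    (measurable_pi_apply t).comp measurable_snd.snd.fst

lemma measurable_timedW : Measurable (timedW (n := n)) :=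
  measurable_from_prod_countable_left fun t =>
    (measurable_pi_apply t).comp measurable_snd.snd.snd

lemma measurable_tU1 : Measurable c.tU1 :=
  measurable_from_prod_countable_left fun t => c.measurable_fbCtrl t

lemma measurable_tX1 : Measurable c.tX1 :=
  c.measurable_tX0.add c.measurable_tU1

lemma measurable_tY1 : Measurable c.tY1 :=
  c.measurable_tX1.add measurable_timedZ

lemma measurable_tT : Measurable c.tT := by
  refine measurable_from_prod_countable_left fun t => ?_
  have hx (s : Fin n) : Measurable fun ω : Sample n => srcX0 ω s :=
    (measurable_pi_apply s).comp measurable_fst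
  have hy (s : Fin n) : Measurable fun ω : Sample n => c.Y1 ω s :=
    ((hx s).add (c.measurable_fbCtrl s)).add
      ((measurable_pi_apply s).comp measurable_snd.fst)
  refine (Measurable.prodMk ?_ ?_).prodMk measurable_const
  · exact measurable_pi_iff.2 fun s => Measurable.ite (by simp) (hx s) measurable_const
  · exact measurable_pi_iff.2 fun s => Measurable.ite (by simp) (hy s) measurable_const

/-- The encoder at the random time, as a function of `((X₀, T), V)`. -/
def encT (p : (ℝ × ((Path n × Path n) × Fin n)) × ℝ) : ℝ :=
  c.enc p.1.2.2 (Function.update p.1.2.1.1 p.1.2.2 p.1.1) p.1.2.1.2 p.2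

/-- The decoder at the random time, as a function of `((T, Y₁), W)`. -/
def decT (p : (((Path n × Path n) × Fin n) × ℝ) × ℝ) : ℝ :=
  c.dec p.1.1.2 (Function.update p.1.1.1.2 p.1.1.2 p.1.2) p.1.1.1.1 p.2

lemma measurable_encT : Measurable c.encT := by
  have h : Measurable fun q : ((ℝ × (Path n × Path n)) × ℝ) × Fin n =>
      c.encT ((q.1.1.1, (q.1.1.2, q.2)), q.1.2) := by
    refine measurable_from_prod_countable_left fun t => (c.enc_meas t).comp
      (f := fun q : (ℝ × (Path n × Path n)) × ℝ =>
        (((Function.update q.1.2.1 t q.1.1, q.1.2.2), q.2) : (Path n × Path n) × ℝ)) ?_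
    have hu := (measurePreserving_update (gaussianReal 0 1) t).measurable.comp
      (g := fun p : (Fin n → ℝ) × ℝ => Function.update p.1 t p.2)
      (f := fun q : (ℝ × (Path n × Path n)) × ℝ => (q.1.2.1, q.1.1)) (by fun_prop)
    exact (hu.prodMk (by fun_prop)).prodMk (by fun_prop)
  exact h.comp (f := fun p : (ℝ × ((Path n × Path n) × Fin n)) × ℝ =>
    (((p.1.1, p.1.2.1), p.2), p.1.2.2)) (by fun_prop)

lemma measurable_decT : Measurable c.decT := by
  have h : Measurable fun q : (((Path n × Path n) × ℝ) × ℝ) × Fin n =>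
      c.decT (((q.1.1.1, q.2), q.1.1.2), q.1.2) := by
    refine measurable_from_prod_countable_left fun t => (c.dec_meas t).comp
      (f := fun q : ((Path n × Path n) × ℝ) × ℝ =>
        (((Function.update q.1.1.2 t q.1.2, q.1.1.1), q.2) : (Path n × Path n) × ℝ)) ?_
    have hu := (measurePreserving_update (gaussianReal 0 1) t).measurable.comp
      (g := fun p : (Fin n → ℝ) × ℝ => Function.update p.1 t p.2)
      (f := fun q : ((Path n × Path n) × ℝ) × ℝ => (q.1.1.2, q.1.2)) (by fun_prop)
    exact (hu.prodMk (by fun_prop)).prodMk (by fun_prop)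
  exact h.comp (f := fun p : (((Path n × Path n) × Fin n) × ℝ) × ℝ =>
    (((p.1.1.1, p.1.2), p.2), p.1.1.2)) (by fun_prop)

lemma tU1_eq_encT (ω : TimedSample n) : c.tU1 ω = c.encT ((c.tX0 ω, c.tT ω), timedV ω) := by
  obtain ⟨ω, t⟩ := ω
  simp only [tU1, U1, encT, tX0, tT, timedV]
  rw [fbCtrl, dif_pos t.2]
  refine c.enc_causal _ _ _ _ _ _ (fun s hs => ?_) fun s hs => ?_
  · by_cases h : s = t
    · subst h; simp
    · have hlt : s < t := lt_of_le_of_ne hs h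
      simp [h, hlt]
  · have hlt : (s : ℕ) < t := hs
    simp [hlt, Y1, X1, U1]

lemma tU2_eq_decT (ω : TimedSample n) : c.tU2 ω = c.decT ((c.tT ω, c.tY1 ω), timedW ω) := by
  obtain ⟨ω, t⟩ := ω
  simp only [tU2, U2, decT, tY1, tT, timedW]
  refine c.dec_causal _ _ _ _ _ _ (fun s hs => ?_) fun s hs => ?_
  · by_cases h : s = t
    · subst h; simp
    · have hlt : s < t := lt_of_le_of_ne hs h
      simp [h, hlt]
  · have hlt : (s : ℕ) < t := hs
    simp [hlt]

lemma measurable_tU2 : Measurable c.tU2 := by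
  rw [funext c.tU2_eq_decT]
  exact c.measurable_decT.comp ((c.measurable_tT.prodMk c.measurable_tY1).prodMk measurable_timedW)

/-- The auxiliary variable only depends on the strict past of the source, noise and seeds. -/
lemma tT_congr {ω ω' : Sample n} {t : Fin n} (hx : ∀ s < t, srcX0 ω s = srcX0 ω' s)
    (hz : ∀ s < t, noiseZ ω s = noiseZ ω' s) (hv : ∀ s < t, seedV ω s = seedV ω' s) :
    c.tT (ω, t) = c.tT (ω', t) := by
  have hx' (s : Fin n) : (if (s : ℕ) < t then srcX0 ω s else 0) =
      if (s : ℕ) < t then srcX0 ω' s else 0 := by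
    split_ifs with hs
    exacts [hx s hs, rfl]
  have hy' (s : Fin n) : (if (s : ℕ) < t then c.Y1 ω s else 0) =
      if (s : ℕ) < t then c.Y1 ω' s else 0 := by
    split_ifs with hs
    · simp only [Y1, X1, U1]
      rw [hx s hs, hz s hs, c.fbCtrl_congr s (fun i hi => hx i (lt_of_le_of_lt hi hs))
        (fun i hi => hz i (lt_trans hi hs)) (fun i hi => hv i (lt_of_le_of_lt hi hs))]
    · rfl
  simp only [tT, hx', hy']

lemma tT_resampleX (ω : TimedSample n) (a : ℝ) : c.tT (resampleX (ω, a)) = c.tT ω :=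
  c.tT_congr (fun _ hs => Function.update_of_ne hs.ne _ _) (fun _ _ => rfl) fun _ _ => rfl

lemma tT_resampleZ (ω : TimedSample n) (a : ℝ) : c.tT (resampleZ (ω, a)) = c.tT ω :=
  c.tT_congr (fun _ _ => rfl) (fun _ hs => Function.update_of_ne hs.ne _ _) fun _ _ => rfl

lemma tT_resampleV (ω : TimedSample n) (a : ℝ) : c.tT (resampleV (ω, a)) = c.tT ω :=
  c.tT_congr (fun _ _ => rfl) (fun _ _ => rfl) fun _ hs => Function.update_of_ne hs.ne _ _

lemma tU1_resampleZ (ω : TimedSample n) (a : ℝ) : c.tU1 (resampleZ (ω, a)) = c.tU1 ω :=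
  c.fbCtrl_congr _ (fun _ _ => rfl)
    (fun _ hs => Function.update_of_ne (Fin.ne_of_lt hs) _ _) fun _ _ => rfl

variable [NeZero n] (Q N : ℝ≥0)

lemma indepFun_tT_tX0 : IndepFun c.tT c.tX0 (timedBase n Q N) ∧
    (timedBase n Q N).map c.tX0 = gaussianReal 0 Q :=
  indepFun_and_map_eq_of_resample (measurePreserving_resampleX Q N) c.measurable_tT
    c.measurable_tX0 c.tT_resampleX fun _ _ => Function.update_self _ _ _

lemma indepFun_timedV :
    IndepFun (fun ω => (c.tX0 ω, c.tT ω)) timedV (timedBase n Q N) ∧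
      (timedBase n Q N).map timedV = gaussianReal 0 1 :=
  indepFun_and_map_eq_of_resample (measurePreserving_resampleV Q N)
    (c.measurable_tX0.prodMk c.measurable_tT) measurable_timedV
    (fun ω a => Prod.ext rfl (c.tT_resampleV ω a)) fun _ _ => Function.update_self _ _ _

lemma indepFun_timedZ :
    IndepFun (fun ω => ((c.tX0 ω, c.tT ω), c.tU1 ω)) timedZ (timedBase n Q N) ∧
      (timedBase n Q N).map timedZ = gaussianReal 0 N :=
  indepFun_and_map_eq_of_resample (measurePreserving_resampleZ Q N)
    ((c.measurable_tX0.prodMk c.measurable_tT).prodMk c.measurable_tU1) measurable_timedZ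
    (fun ω a => Prod.ext (Prod.ext rfl (c.tT_resampleZ ω a)) (c.tU1_resampleZ ω a))
    fun _ _ => Function.update_self _ _ _

lemma indepFun_timedW :
    IndepFun (fun ω => (((c.tX0 ω, c.tT ω), c.tU1 ω), timedZ ω)) timedW (timedBase n Q N) ∧
      (timedBase n Q N).map timedW = gaussianReal 0 1 :=
  indepFun_and_map_eq_of_resample (measurePreserving_resampleW Q N)
    (((c.measurable_tX0.prodMk c.measurable_tT).prodMk c.measurable_tU1).prodMk
      measurable_timedZ) measurable_timedW
    (fun _ _ => rfl) fun _ _ => Function.update_self _ _ _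

/-- The single-letter decomposition induced by the design. -/
def slDecomp : SLDecomp Q N ((Path n × Path n) × Fin n) where
  μT := (timedBase n Q N).map c.tT
  probT := Measure.isProbabilityMeasure_map c.measurable_tT.aemeasurable
  κ1 := noiseKernel (gaussianReal 0 1) c.encT
  markov1 := isMarkovKernel_noiseKernel _ c.measurable_encT
  κ2 := noiseKernel (gaussianReal 0 1) c.decT
  markov2 := isMarkovKernel_noiseKernel _ c.measurable_decT

lemma map_eq_slDecomp_measure :
    (timedBase n Q N).map (fun ω => ((((c.tX0 ω, c.tT ω), c.tU1 ω), timedZ ω), c.tU2 ω)) =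
      (c.slDecomp Q N).measure := by
  have hX := c.measurable_tX0
  have hT := c.measurable_tT
  have hU := c.measurable_tU1
  have hZ := measurable_timedZ (n := n)
  have hV := measurable_timedV (n := n)
  have hW := measurable_timedW (n := n)
  obtain ⟨hTX, hlX⟩ := c.indepFun_tT_tX0 Q N
  obtain ⟨hiV, hlV⟩ := c.indepFun_timedV Q N
  obtain ⟨hiZ, hlZ⟩ := c.indepFun_timedZ Q N
  obtain ⟨hiW, hlW⟩ := c.indepFun_timedW Q N
  have h₁ := hTX.symm.map_prod_eq_prod_map_map hX.aemeasurable hT.aemeasurable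
  have h₂ := map_prodMk_eq_compProd (hX.prodMk hT) hV hiV c.measurable_encT
    (κ := (c.slDecomp Q N).κ1) fun a => by
      rw [hlV]; exact noiseKernel_apply _ c.measurable_encT a
  have h₃ := hiZ.map_prod_eq_prod_map_map ((hX.prodMk hT).prodMk hU).aemeasurable
    hZ.aemeasurable
  have hg : Measurable (fun q : ((ℝ × ((Path n × Path n) × Fin n)) × ℝ) × ℝ =>
      (q.1.1.2, q.1.1.1 + q.1.2 + q.2)) := by fun_prop
  have h₄ := map_prodMk_eq_compProd (((hX.prodMk hT).prodMk hU).prodMk hZ) hW hiW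
    (φ := fun p => c.decT ((p.1.1.1.2, p.1.1.1.1 + p.1.1.2 + p.1.2), p.2))
    (c.measurable_decT.comp (by fun_prop)) (κ := (c.slDecomp Q N).κ2.comap _ hg) fun a => by
      rw [hlW, Kernel.comap_apply]; exact noiseKernel_apply _ c.measurable_decT _
  simp only [← tU1_eq_encT] at h₂
  have hU2 (ω : TimedSample n) : c.tU2 ω =
      c.decT ((c.tT ω, c.tX0 ω + c.tU1 ω + timedZ ω), timedW ω) := c.tU2_eq_decT ω
  simp only [hU2]
  rw [h₄, h₃, h₂, h₁, hlX, hlZ]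
  rfl

end FBFFDesign

lemma witChannel_apply (N : ℝ≥0) (p : ℝ × ℝ) :
    witChannel N p = (gaussianReal 0 N).map (fun z => (p.1 + p.2, p.1 + p.2 + z)) := by
  rw [witChannel, Kernel.map_apply _ (by fun_prop)]
  ext s hs
  rw [Measure.map_apply (by fun_prop) hs, Measure.map_apply (by fun_prop) hs,
    Kernel.compProd_apply (by measurability), Kernel.id_apply, lintegral_dirac]
  rfl

instance (N : ℝ≥0) : IsMarkovKernel (witChannel N) :=
  Kernel.IsMarkovKernel.map _ (by fun_prop)

/-- **Converse structural lemma with channel feedback and source feed-forward** (Appendix B):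
for any control design `c ∈ C_{ed,f,f}(n)`, with `Q` an independent uniform time, the
single-letter variables `X₀, U₁, X₁, Y₁, U₂` at time `Q` together with the auxiliary variable
`T = ((X₀^{Q-1}, Y₁^{Q-1}), Q)` satisfy:
(i) `X₀` is independent of `T`;
(ii) the conditional law of `(X₁, Y₁)` given `(X₀, U₁, T)` is the Witsenhausen channel and
depends only on `(X₀, U₁)`;
(iii) `U₂` is conditionally independent of `(X₀, U₁, X₁)` given `(T, Y₁)`;
and consequently the joint law of `(X₀, T, U₁, X₁, Y₁, U₂)` decomposes according to
`P_{X₀} P_T P_{U₁|X₀,T} P_{X₁,Y₁|X₀,U₁} P_{U₂|T,Y₁}`. -/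
theorem converse_structure_feedback_feedforward (Q N : ℝ≥0) (hQ : 0 < Q) (hN : 0 < N)
    (n : ℕ) [NeZero n] (c : FBFFDesign n) :
    -- (i)
    IndepFun c.tX0 c.tT (timedBase n Q N) ∧
    -- (ii)
    (∀ᵐ p ∂((timedBase n Q N).map (fun ω => (c.tX0 ω, c.tU1 ω, c.tT ω))),
      condDistrib (fun ω => (c.tX1 ω, c.tY1 ω)) (fun ω => (c.tX0 ω, c.tU1 ω, c.tT ω))
          (timedBase n Q N) p
        = (witChannel N).comap
            (fun p : ℝ × ℝ × ((Path n × Path n) × Fin n) => (p.1, p.2.1))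
            (by fun_prop) p) ∧
    -- (iii)
    (∀ᵐ p ∂((timedBase n Q N).map
        (fun ω => (c.tT ω, c.tY1 ω, c.tX0 ω, c.tU1 ω, c.tX1 ω))),
      condDistrib c.tU2 (fun ω => (c.tT ω, c.tY1 ω, c.tX0 ω, c.tU1 ω, c.tX1 ω))
          (timedBase n Q N) p
        = condDistrib c.tU2 (fun ω => (c.tT ω, c.tY1 ω)) (timedBase n Q N) (p.1, p.2.1)) ∧
    -- consequence: the single-letter joint distribution decomposes
    (∃ d : SLDecomp Q N ((Path n × Path n) × Fin n),
      (timedBase n Q N).map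
          (fun ω => (c.tX0 ω, c.tT ω, c.tU1 ω, c.tX1 ω, c.tY1 ω, c.tU2 ω))
        = d.joint) := by
  have hX := c.measurable_tX0
  have hT := c.measurable_tT
  have hU := c.measurable_tU1
  have hX1 := c.measurable_tX1
  have hY := c.measurable_tY1
  have hU2 := c.measurable_tU2
  have hZ := FBFFDesign.measurable_timedZ (n := n)
  have hW := FBFFDesign.measurable_timedW (n := n)
  refine ⟨(c.indepFun_tT_tX0 Q N).1.symm, ?_, ?_, c.slDecomp Q N, ?_⟩
  · obtain ⟨hiZ, hlZ⟩ := c.indepFun_timedZ Q N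
    refine condDistrib_ae_eq_of_measure_eq_compProd_of_measurable (by fun_prop) (by fun_prop) ?_
    refine map_prodMk_eq_compProd (A := fun ω => (c.tX0 ω, c.tU1 ω, c.tT ω)) (by fun_prop) hZ
      (hiZ.comp (φ := fun q : (ℝ × ((Path n × Path n) × Fin n)) × ℝ => (q.1.1, q.2, q.1.2))
        (by fun_prop) measurable_id)
      (φ := fun p => (p.1.1 + p.1.2.1, p.1.1 + p.1.2.1 + p.2)) (by fun_prop) fun a => ?_
    rw [hlZ, Kernel.comap_apply, witChannel_apply]
  · obtain ⟨hiW, hlW⟩ := c.indepFun_timedW Q N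
    have hd := c.measurable_decT
    have hK := isMarkovKernel_noiseKernel (gaussianReal 0 1) hd
    have hsmall : condDistrib c.tU2 (fun ω => (c.tT ω, c.tY1 ω)) (timedBase n Q N)
        =ᵐ[(timedBase n Q N).map (fun ω => (c.tT ω, c.tY1 ω))]
          noiseKernel (gaussianReal 0 1) c.decT := by
      refine condDistrib_ae_eq_of_measure_eq_compProd_of_measurable (by fun_prop) hU2 ?_
      rw [funext c.tU2_eq_decT]
      refine map_prodMk_eq_compProd (by fun_prop) hW
        (hiW.comp (φ := fun q : ((ℝ × ((Path n × Path n) × Fin n)) × ℝ) × ℝ =>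
          (q.1.1.2, q.1.1.1 + q.1.2 + q.2)) (by fun_prop) measurable_id) hd fun a => ?_
      rw [hlW, noiseKernel_apply _ hd]
    have hbig : condDistrib c.tU2 (fun ω => (c.tT ω, c.tY1 ω, c.tX0 ω, c.tU1 ω, c.tX1 ω))
          (timedBase n Q N)
        =ᵐ[(timedBase n Q N).map (fun ω => (c.tT ω, c.tY1 ω, c.tX0 ω, c.tU1 ω, c.tX1 ω))]
          (noiseKernel (gaussianReal 0 1) c.decT).comap
            (fun p : ((Path n × Path n) × Fin n) × ℝ × ℝ × ℝ × ℝ => (p.1, p.2.1))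
            (by fun_prop) := by
      refine condDistrib_ae_eq_of_measure_eq_compProd_of_measurable (by fun_prop) hU2 ?_
      rw [funext c.tU2_eq_decT]
      refine map_prodMk_eq_compProd
        (A := fun ω => (c.tT ω, c.tY1 ω, c.tX0 ω, c.tU1 ω, c.tX1 ω)) (by fun_prop) hW
        (hiW.comp (φ := fun q : ((ℝ × ((Path n × Path n) × Fin n)) × ℝ) × ℝ =>
          (q.1.1.2, q.1.1.1 + q.1.2 + q.2, q.1.1.1, q.1.2, q.1.1.1 + q.1.2))
          (by fun_prop) measurable_id)
        (φ := fun p => c.decT ((p.1.1, p.1.2.1), p.2)) (by fun_prop) fun a => ?_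
      rw [hlW, Kernel.comap_apply, noiseKernel_apply _ hd]
    have hproj : (timedBase n Q N).map (fun ω => (c.tT ω, c.tY1 ω)) =
        ((timedBase n Q N).map (fun ω => (c.tT ω, c.tY1 ω, c.tX0 ω, c.tU1 ω, c.tX1 ω))).map
          (fun p => (p.1, p.2.1)) := by
      rw [Measure.map_map (by fun_prop) (by fun_prop)]
      rfl
    rw [hproj] at hsmall
    filter_upwards [hbig, ae_of_ae_map (by fun_prop) hsmall] with p hp hp'
    rw [hp, hp', Kernel.comap_apply]
  · rw [SLDecomp.joint, ← c.map_eq_slDecomp_measure Q N, Measure.map_map]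
    · rfl
    · simp only [SLDecomp.sX0, SLDecomp.sT, SLDecomp.sU1, SLDecomp.sX1, SLDecomp.sY1,
        SLDecomp.sZ, SLDecomp.sU2]
      fun_prop
    · fun_prop

end

end Witsenhausen
end
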